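/- Let A : W → V be an injective linear map with L := Image(A) ∈ Gr(V,m), and assume L ∩ int(K) ≠ ∅. Define R(A) := inf{|||A − Ã||| : Ã : W → V linear such that Ã*u = 0 for some u ∈ K*\{0}}, where Ã* is the adjoint of Ã. Then R(A) ≤ ‖A‖ · dist(L,Σ_m) and dist(L,Σ_m) ≤ ‖A^{-1}‖ · R(A); equivalently, 1/‖A‖ ≤ dist(L,Σ_m)/R(A) ≤ ‖A^{-1}‖. -/

import Mathlib

/-!
Each inequality turns a competitor for one infimum into a competitor for the other.

For `R(A) ≤ ‖A‖ * dist(L, Σ_m)`, an ill-posed `L'` is orthogonal to some nonzero `u ∈ K*`. If `z` is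
the vector of least norm `|||z|||` with `⟪u, z⟫ = 1`, then `B = A - ⟪u, A ·⟫ z` satisfies `B* u = 0`,
and `|||A w - B w||| = |⟪u, A w⟫| |||z|||` is at most the distance from `A w` to any point of `L'`
(`exists_vector_attaining_dualNorm`, `exists_perturbation`).

For `dist(L, Σ_m) ≤ ‖A⁻¹‖ * R(A)`, let `B* u = 0` with `u ∈ K*` nonzero. The image of `B` misses
`int K` while that of `A` meets it, so there is a first `t ∈ [0, 1]` at which the image `M` of
`C = A + t (B - A)` misses `int K`; by separation `M` is orthogonal to a nonzero element of `K*`. If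
`C` is injective, a compactness argument gives a nonzero vector of `M ∩ K`, so `M` is ill-posed. If
not, `dim M < m`, and then `Mᗮ` has dimension at least two, so it contains a nonzero element of `K*`
annihilating a nonzero vector `x ∈ K`; `M + ℝ x` extends to an ill-posed subspace. In both cases an
ill-posed `L' ⊇ M` results (`exists_sigmaIll_on_segment`), and approximating `A w` by `C w ∈ L'`
gives the bound. The same construction, applied to `B = 0`, shows that `Σ_m` is nonempty, so that the
infimum defining `dist(L, Σ_m)` is a genuine one.
-/

open Module RealInnerProductSpace

/-- `N` is a norm on the real vector space `V`. -/
structure IsNorm (V : Type*) [AddCommGroup V] [Module ℝ V] (N : V → ℝ) : Prop where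
  nonneg : ∀ x, 0 ≤ N x
  eq_zero_iff : ∀ x, N x = 0 ↔ x = 0
  smul_eq : ∀ (c : ℝ) (x : V), N (c • x) = |c| * N x
  add_le : ∀ x y, N (x + y) ≤ N x + N y

/-- `K` is a regular closed convex cone: closed, convex, a cone, pointed and solid. -/
structure IsRegularCone (V : Type*) [NormedAddCommGroup V] [InnerProductSpace ℝ V]
    (K : Set V) : Prop where
  closed : IsClosed K
  convex : Convex ℝ K
  smul_mem : ∀ ⦃c : ℝ⦄, 0 < c → ∀ ⦃x⦄, x ∈ K → c • x ∈ K
  pointed : K ∩ (-K) = {0}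
  solid : (interior K).Nonempty

variable {V : Type*} [NormedAddCommGroup V] [InnerProductSpace ℝ V]

/-- The dual norm of `N` with respect to the inner product of `V`. -/
noncomputable def dualNorm (N : V → ℝ) (u : V) : ℝ :=
  sSup {r : ℝ | ∃ x : V, N x = 1 ∧ r = ⟪u, x⟫}

/-- The dual cone of `K`. -/
def dualCone (K : Set V) : Set V := {u : V | ∀ x ∈ K, 0 ≤ ⟪u, x⟫}

/-- `dist(L1,L2) = max_{x ∈ L1, x ≠ 0} min_{v ∈ L2} |||x - v||| / ‖x‖`,
with `‖·‖ = N` and `|||·||| = N'`. -/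
noncomputable def grDist (N N' : V → ℝ) (L1 L2 : Submodule ℝ V) : ℝ :=
  sSup {d : ℝ | ∃ x ∈ L1, x ≠ 0 ∧ d = sInf {c : ℝ | ∃ v ∈ L2, c = N' (x - v) / N x}}

/-- `odist(L1,L2) = max_{x ∈ L1, x ≠ 0} inf_{v ∈ L2, v ≠ 0} |||x - v||| / ‖v‖`. -/
noncomputable def grOdist (N N' : V → ℝ) (L1 L2 : Submodule ℝ V) : ℝ :=
  sSup {d : ℝ | ∃ x ∈ L1, x ≠ 0 ∧
    d = sInf {c : ℝ | ∃ v ∈ L2, v ≠ 0 ∧ c = N' (x - v) / N v}}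

/-- The set `Σ_m` of ill-posed `m`-dimensional subspaces. -/
def SigmaIll (K : Set V) (m : ℕ) : Set (Submodule ℝ V) :=
  {L | finrank ℝ L = m ∧ (L : Set V) ∩ K ≠ {0} ∧ (Lᗮ : Set V) ∩ dualCone K ≠ {0}}

/-- `dist(L, Σ_m) = inf_{L' ∈ Σ_m} dist(L, L')`. -/
noncomputable def distToIll (N N' : V → ℝ) (K : Set V) (m : ℕ) (L : Submodule ℝ V) : ℝ :=
  sInf {d : ℝ | ∃ L' ∈ SigmaIll K m, d = grDist N N' L L'}

/-- `odist(Σ_m, L) = inf_{L' ∈ Σ_m} odist(L', L)`. -/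
noncomputable def odistToIll (N N' : V → ℝ) (K : Set V) (m : ℕ) (L : Submodule ℝ V) : ℝ :=
  sInf {d : ℝ | ∃ L' ∈ SigmaIll K m, d = grOdist N N' L' L}

/-- `ν(L) = min {‖y - u‖* : u ∈ K*, y ∈ L^⊥, |||u|||* = 1}`. -/
noncomputable def nu (N N' : V → ℝ) (K : Set V) (L : Submodule ℝ V) : ℝ :=
  sInf {r : ℝ | ∃ u ∈ dualCone K, ∃ y ∈ Lᗮ, dualNorm N' u = 1 ∧ r = dualNorm N (y - u)}

/-- `ν̄(L) = min {|||v - x||| : v ∈ K, x ∈ L, ‖x‖ = 1}`. -/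
noncomputable def nubar (N N' : V → ℝ) (K : Set V) (L : Submodule ℝ V) : ℝ :=
  sInf {r : ℝ | ∃ v ∈ K, ∃ x ∈ L, N x = 1 ∧ r = N' (v - x)}

/-- `λ_v(x) = sup {t : x - t v ∈ K}`. -/
noncomputable def lambdaVec (K : Set V) (v x : V) : ℝ := sSup {t : ℝ | x - t • v ∈ K}

/-- `σ(L) = min_{v ∈ K, |||v||| = 1} max_{x ∈ L, ‖x‖ ≤ 1} λ_v(x)`. -/
noncomputable def sigmaMeas (N N' : V → ℝ) (K : Set V) (L : Submodule ℝ V) : ℝ :=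
  sInf {r : ℝ | ∃ v ∈ K, N' v = 1 ∧
    r = sSup {c : ℝ | ∃ x ∈ L, N x ≤ 1 ∧ c = lambdaVec K v x}}

/-- `Sym(L) = min_{v ∈ K, ‖v‖ = 1} sup {t ≥ 0 : ∃ x ∈ K, ‖x‖ ≤ 1, x + t v ∈ L}`. -/
noncomputable def symMeas (N : V → ℝ) (K : Set V) (L : Submodule ℝ V) : ℝ :=
  sInf {r : ℝ | ∃ v ∈ K, N v = 1 ∧
    r = sSup {t : ℝ | 0 ≤ t ∧ ∃ x ∈ K, N x ≤ 1 ∧ x + t • v ∈ L}}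

/-- The norm `‖·‖_e` induced by the pair `(K, e)`. -/
noncomputable def inducedNorm (K : Set V) (e : V) (x : V) : ℝ :=
  sInf {α : ℝ | 0 ≤ α ∧ x + α • e ∈ K ∧ -x + α • e ∈ K}

variable {W : Type*} [NormedAddCommGroup W] [InnerProductSpace ℝ W]

/-- The operator norm of a linear map `B : W → V`, with norm `NW` on `W` and `N` on `V`. -/
noncomputable def opNorm (NW : W → ℝ) (N : V → ℝ) (B : W →ₗ[ℝ] V) : ℝ :=
  sSup {r : ℝ | ∃ w : W, NW w = 1 ∧ r = N (B w)}

/-- `‖A⁻¹‖ = max_{x ∈ Image A, ‖x‖ = 1} |A⁻¹ x|` for injective `A`. -/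
noncomputable def invNorm (NW : W → ℝ) (N : V → ℝ) (A : W →ₗ[ℝ] V) : ℝ :=
  sSup {r : ℝ | ∃ w : W, N (A w) = 1 ∧ r = NW w}

/-! ### Norms on finite-dimensional spaces -/

lemma IsNorm.map_neg {N : V → ℝ} (hN : IsNorm V N) (x : V) : N (-x) = N x := by
  simpa using hN.smul_eq (-1) x

lemma IsNorm.pos {N : V → ℝ} (hN : IsNorm V N) {x : V} (hx : x ≠ 0) : 0 < N x :=
  lt_of_le_of_ne (hN.nonneg x) fun h => hx ((hN.eq_zero_iff x).1 h.symm)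

lemma IsNorm.continuous [FiniteDimensional ℝ V] {N : V → ℝ} (hN : IsNorm V N) :
    Continuous N := by
  have hc : ConvexOn ℝ Set.univ N := by
    refine ⟨convex_univ, fun x _ y _ a b ha hb _ => ?_⟩
    have h := hN.add_le (a • x) (b • y)
    rwa [hN.smul_eq, hN.smul_eq, abs_of_nonneg ha, abs_of_nonneg hb] at h
  exact hc.locallyLipschitz.continuous

lemma IsNorm.comp_injective {N : V → ℝ} (hN : IsNorm V N) (A : W →ₗ[ℝ] V)
    (hA : Function.Injective A) : IsNorm W (fun w => N (A w)) where
  nonneg w := hN.nonneg _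
  eq_zero_iff w := by rw [hN.eq_zero_iff, map_eq_zero_iff A hA]
  smul_eq c w := by rw [map_smul, hN.smul_eq]
  add_le w w' := by rw [map_add]; exact hN.add_le _ _

/-- The unit sphere of any norm on a finite-dimensional space is compact. -/
lemma IsNorm.isCompact_sphere [FiniteDimensional ℝ V] {N : V → ℝ} (hN : IsNorm V N) :
    IsCompact {x : V | N x = 1} := by
  have hcl : IsClosed {x : V | N x = 1} := isClosed_eq hN.continuous continuous_const
  by_cases hne : (Metric.sphere (0 : V) 1).Nonempty
  · obtain ⟨x₀, hx₀, hmin⟩ :=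
      (_root_.isCompact_sphere (0 : V) 1).exists_isMinOn hne hN.continuous.continuousOn
    have hx₀' : x₀ ≠ 0 := by
      rintro rfl
      simp at hx₀
    have hc := hN.pos hx₀'
    refine Metric.isCompact_of_isClosed_isBounded hcl
      ((Metric.isBounded_closedBall (x := (0 : V)) (r := (N x₀)⁻¹)).subset ?_)
    intro x hx
    have hx1 : N x = 1 := hx
    have hx0 : x ≠ 0 := by
      rintro rfl
      rw [(hN.eq_zero_iff 0).2 rfl] at hx1
      norm_num at hx1
    have hnx : 0 < ‖x‖ := norm_pos_iff.2 hx0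
    have h : N x₀ ≤ N (‖x‖⁻¹ • x) := hmin (by simp [norm_smul, hnx.ne'])
    rw [hN.smul_eq, hx1, mul_one, abs_of_pos (inv_pos.2 hnx)] at h
    rw [mem_closedBall_zero_iff]
    exact (le_inv_comm₀ hc hnx).1 h
  · convert isCompact_empty
    rw [Set.eq_empty_iff_forall_notMem]
    intro x hx
    have hx1 : N x = 1 := hx
    have hx0 : x ≠ 0 := by
      rintro rfl
      rw [(hN.eq_zero_iff 0).2 rfl] at hx1
      norm_num at hx1
    exact hne ⟨‖x‖⁻¹ • x, by simp [norm_smul, hx0]⟩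

lemma IsNorm.bddAbove [FiniteDimensional ℝ V] {N : V → ℝ} (hN : IsNorm V N)
    {f : V → ℝ} (hf : Continuous f) : BddAbove {r : ℝ | ∃ x : V, N x = 1 ∧ r = f x} := by
  refine (hN.isCompact_sphere.image hf).bddAbove.mono ?_
  rintro r ⟨x, hx, rfl⟩
  exact ⟨x, hx, rfl⟩

/-- For a continuous absolutely homogeneous `f`, the supremum over the unit sphere of `N` is finite
and bounds `f` relative to `N`. Both `opNorm` and `invNorm` are instances of this supremum. -/
lemma IsNorm.le_sSup_mul [FiniteDimensional ℝ V] {N : V → ℝ} (hN : IsNorm V N)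
    {f : V → ℝ} (hf : Continuous f) (hs : ∀ (c : ℝ) x, f (c • x) = |c| * f x) (x : V) :
    f x ≤ sSup {r : ℝ | ∃ x : V, N x = 1 ∧ r = f x} * N x := by
  by_cases hx : x = 0
  · subst hx
    have h0 : f 0 = 0 := by simpa using hs 0 0
    rw [h0, (hN.eq_zero_iff 0).2 rfl, mul_zero]
  · have hp := hN.pos hx
    have h := le_csSup (hN.bddAbove hf) (a := f ((N x)⁻¹ • x))
      ⟨_, by rw [hN.smul_eq, abs_of_pos (inv_pos.2 hp), inv_mul_cancel₀ hp.ne'], rfl⟩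
    rw [hs, abs_of_pos (inv_pos.2 hp), inv_mul_le_iff₀ hp] at h
    linarith

lemma le_opNorm [FiniteDimensional ℝ V] [FiniteDimensional ℝ W] {NW : W → ℝ} {N : V → ℝ}
    (hNW : IsNorm W NW) (hN : IsNorm V N) (B : W →ₗ[ℝ] V) (w : W) :
    N (B w) ≤ opNorm NW N B * NW w :=
  hNW.le_sSup_mul (f := fun w => N (B w))
    (hN.continuous.comp B.continuous_of_finiteDimensional)
    (fun c x => by rw [map_smul, hN.smul_eq]) w

lemma opNorm_nonneg {NW : W → ℝ} {N : V → ℝ} (hN : IsNorm V N) (B : W →ₗ[ℝ] V) :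
    0 ≤ opNorm NW N B := by
  refine Real.sSup_nonneg ?_
  rintro r ⟨w, -, rfl⟩
  exact hN.nonneg _

lemma le_invNorm [FiniteDimensional ℝ V] [FiniteDimensional ℝ W] {NW : W → ℝ} {N : V → ℝ}
    (hNW : IsNorm W NW) (hN : IsNorm V N) (A : W →ₗ[ℝ] V) (hA : Function.Injective A) (w : W) :
    NW w ≤ invNorm NW N A * N (A w) :=
  (hN.comp_injective A hA).le_sSup_mul hNW.continuous hNW.smul_eq w

lemma invNorm_nonneg {NW : W → ℝ} {N : V → ℝ} (hNW : IsNorm W NW) (A : W →ₗ[ℝ] V) :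
    0 ≤ invNorm NW N A := by
  refine Real.sSup_nonneg ?_
  rintro r ⟨w, -, rfl⟩
  exact hNW.nonneg _

/-! ### The Grassmann distance -/

lemma inner_grDist_nonneg {N N' : V → ℝ} (hN : IsNorm V N) (hN' : IsNorm V N')
    (L' : Submodule ℝ V) (x : V) : 0 ≤ sInf {c : ℝ | ∃ v ∈ L', c = N' (x - v) / N x} := by
  refine Real.sInf_nonneg ?_
  rintro r ⟨v, -, rfl⟩
  exact div_nonneg (hN'.nonneg _) (hN.nonneg _)

lemma inner_grDist_le {N N' : V → ℝ} (hN : IsNorm V N) (hN' : IsNorm V N')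
    {L' : Submodule ℝ V} (x : V) {v : V} (hv : v ∈ L') :
    sInf {c : ℝ | ∃ v ∈ L', c = N' (x - v) / N x} ≤ N' (x - v) / N x := by
  refine csInf_le ⟨0, ?_⟩ ⟨v, hv, rfl⟩
  rintro r ⟨v, -, rfl⟩
  exact div_nonneg (hN'.nonneg _) (hN.nonneg _)

lemma grDist_nonneg {N N' : V → ℝ} (hN : IsNorm V N) (hN' : IsNorm V N')
    (L L' : Submodule ℝ V) : 0 ≤ grDist N N' L L' := by
  refine Real.sSup_nonneg ?_
  rintro r ⟨x, -, -, rfl⟩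
  exact inner_grDist_nonneg hN hN' L' x

lemma le_grDist [FiniteDimensional ℝ V] {N N' : V → ℝ} (hN : IsNorm V N) (hN' : IsNorm V N')
    {L L' : Submodule ℝ V} {x : V} (hx : x ∈ L) (hx0 : x ≠ 0) :
    sInf {c : ℝ | ∃ v ∈ L', c = N' (x - v) / N x} ≤ grDist N N' L L' := by
  refine le_csSup ⟨opNorm N N' LinearMap.id, ?_⟩ ⟨x, hx, hx0, rfl⟩
  rintro r ⟨y, -, hy0, rfl⟩
  refine (inner_grDist_le hN hN' y L'.zero_mem).trans ?_
  rw [sub_zero, div_le_iff₀ (hN.pos hy0)]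
  exact le_opNorm hN hN' LinearMap.id y

lemma distToIll_le {N N' : V → ℝ} (hN : IsNorm V N) (hN' : IsNorm V N') {K : Set V} {m : ℕ}
    (L : Submodule ℝ V) {L' : Submodule ℝ V} (hL' : L' ∈ SigmaIll K m) :
    distToIll N N' K m L ≤ grDist N N' L L' := by
  refine csInf_le ⟨0, ?_⟩ ⟨L', hL', rfl⟩
  rintro r ⟨L'', -, rfl⟩
  exact grDist_nonneg hN hN' _ _

/-! ### Producing ill-posed subspaces -/

/-- Between nested subspaces there is one of every intermediate dimension. -/
lemma exists_finrank_between [FiniteDimensional ℝ V] (M H : Submodule ℝ V) (hMH : M ≤ H)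
    (k : ℕ) (hk : finrank ℝ M + k ≤ finrank ℝ H) :
    ∃ L : Submodule ℝ V, M ≤ L ∧ L ≤ H ∧ finrank ℝ L = finrank ℝ M + k := by
  induction k with
  | zero => exact ⟨M, le_rfl, hMH, rfl⟩
  | succ k ih =>
    obtain ⟨L, hML, hLH, hL⟩ := ih (by omega)
    have hlt : L < H := lt_of_le_of_ne hLH (by rintro rfl; omega)
    obtain ⟨v, hvH, hvL⟩ := SetLike.exists_of_lt hlt
    refine ⟨L ⊔ Submodule.span ℝ {v}, hML.trans le_sup_left,
      sup_le hLH ((Submodule.span_singleton_le_iff_mem _ _).2 hvH), ?_⟩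
    have h1 : L < L ⊔ Submodule.span ℝ {v} :=
      lt_of_le_of_ne le_sup_left fun h => hvL
        (h ▸ (le_sup_right : _ ≤ L ⊔ Submodule.span ℝ {v}) (Submodule.mem_span_singleton_self v))
    have h2 := Submodule.finrank_lt_finrank_of_lt h1
    have h3 := Submodule.finrank_add_le_finrank_add_finrank L (Submodule.span ℝ {v})
    have h4 := finrank_span_le_card (R := ℝ) ({v} : Set V)
    simp only [Set.toFinset_singleton, Finset.card_singleton] at h4
    omega

/-- A subspace of dimension at most `m` carrying both certificates of ill-posedness extends, inside
the supporting hyperplane `uᗮ`, to an ill-posed subspace of dimension `m`. -/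
lemma exists_sigmaIll_of_mem [FiniteDimensional ℝ V] {K : Set V} {m : ℕ} (hm : m < finrank ℝ V)
    (M : Submodule ℝ V) (hM : finrank ℝ M ≤ m) {u x : V} (huK : u ∈ dualCone K) (hu0 : u ≠ 0)
    (hu : u ∈ Mᗮ) (hxM : x ∈ M) (hxK : x ∈ K) (hx0 : x ≠ 0) :
    ∃ L' ∈ SigmaIll K m, M ≤ L' := by
  have h1 := Submodule.finrank_add_finrank_orthogonal (Submodule.span ℝ {u})
  rw [finrank_span_singleton hu0] at h1
  have hMH : M ≤ (Submodule.span ℝ {u})ᗮ := by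
    intro z hz
    rw [Submodule.mem_orthogonal_singleton_iff_inner_right]
    exact (Submodule.mem_orthogonal' _ _).1 hu z hz
  obtain ⟨L, hML, hLH, hL⟩ := exists_finrank_between M _ hMH (m - finrank ℝ M) (by omega)
  refine ⟨L, ⟨by omega, ?_, ?_⟩, hML⟩
  · intro h
    have : x ∈ ({0} : Set V) := h ▸ ⟨hML hxM, hxK⟩
    exact hx0 this
  · intro h
    have : u ∈ ({0} : Set V) := by
      refine h ▸ ⟨(Submodule.mem_orthogonal' _ _).2 fun z hz => ?_, huK⟩
      exact (Submodule.mem_orthogonal_singleton_iff_inner_right).1 (hLH hz)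
    exact hu0 this

/-- A subspace `M` of dimension less than `m` which is orthogonal to a nonzero `u ∈ K*` lies in an
ill-posed subspace of dimension `m`. Since `Mᗮ` has dimension at least two, `u` can be moved inside
`Mᗮ ∩ K*` until it annihilates a nonzero vector of `K`. -/
lemma exists_sigmaIll_of_finrank_lt [FiniteDimensional ℝ V] {K : Set V} {m : ℕ}
    (hm : m < finrank ℝ V) (hK : IsRegularCone V K)
    (M : Submodule ℝ V) (hM : finrank ℝ M < m) {u p : V} (huK : u ∈ dualCone K) (hu0 : u ≠ 0)
    (hu : u ∈ Mᗮ) (hpK : p ∈ K) (hp0 : p ≠ 0) :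
    ∃ L' ∈ SigmaIll K m, M ≤ L' := by
  obtain ⟨q, hq0, hqK, hqM, x, hxK, hx0, hqx⟩ : ∃ q : V, q ≠ 0 ∧ q ∈ dualCone K ∧ q ∈ Mᗮ ∧
      ∃ x ∈ K, x ≠ 0 ∧ ⟪q, x⟫ = 0 := by
    by_cases hz : ∃ x ∈ K, x ≠ 0 ∧ ⟪u, x⟫ = 0
    · exact ⟨u, hu0, huK, hu, hz⟩
    push Not at hz
    have hpos : ∀ x ∈ K, x ≠ 0 → 0 < ⟪u, x⟫ := fun x hx h0 =>
      lt_of_le_of_ne (huK x hx) (hz x hx h0).symm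
    obtain ⟨y, hyM, hyu⟩ : ∃ y ∈ Mᗮ, y ∉ Submodule.span ℝ {u} := by
      by_contra! hcon
      have h1 := Submodule.finrank_mono (show Mᗮ ≤ Submodule.span ℝ {u} from hcon)
      rw [finrank_span_singleton hu0] at h1
      have h2 := Submodule.finrank_add_finrank_orthogonal M
      omega
    have hnorm : ∀ x ∈ K, x ≠ 0 → ‖x‖⁻¹ • x ∈ K ∩ Metric.sphere (0 : V) 1 := fun x hx h0 =>
      ⟨hK.smul_mem (inv_pos.2 (norm_pos_iff.2 h0)) hx, by simp [norm_smul, h0]⟩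
    have hne0 : ∀ z ∈ K ∩ Metric.sphere (0 : V) 1, z ≠ 0 := by
      rintro z ⟨-, hz1⟩ rfl
      simp at hz1
    -- The extreme value of `⟪y, ·⟫ / ⟪u, ·⟫` on `K` gives the tangent functional `y - c • u`.
    obtain ⟨x, hx, hmin⟩ := ((isCompact_sphere (0 : V) 1).inter_left hK.closed).exists_isMinOn
      ⟨_, hnorm p hpK hp0⟩ (f := fun z => ⟪y, z⟫ / ⟪u, z⟫)
      (ContinuousOn.div (by fun_prop) (by fun_prop)
        fun z hz => (hpos z hz.1 (hne0 z hz)).ne')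
    have hux := hpos x hx.1 (hne0 x hx)
    refine ⟨y - (⟪y, x⟫ / ⟪u, x⟫) • u, ?_, ?_, ?_, x, hx.1, hne0 x hx, ?_⟩
    · intro h
      rw [sub_eq_zero] at h
      exact hyu (h ▸ Submodule.smul_mem _ _ (Submodule.mem_span_singleton_self u))
    · intro z hzK
      by_cases hz0 : z = 0
      · simp [hz0]
      have h : ⟪y, x⟫ / ⟪u, x⟫ ≤ ⟪y, ‖z‖⁻¹ • z⟫ / ⟪u, ‖z‖⁻¹ • z⟫ := hmin (hnorm z hzK hz0)
      have hnz : ‖z‖⁻¹ ≠ 0 := inv_ne_zero (norm_ne_zero_iff.2 hz0)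
      rw [inner_smul_right, inner_smul_right, mul_div_mul_left _ _ hnz,
        le_div_iff₀ (hpos z hzK hz0)] at h
      rw [inner_sub_left, real_inner_smul_left]
      linarith
    · exact Submodule.sub_mem _ hyM (Submodule.smul_mem _ _ hu)
    · rw [inner_sub_left, real_inner_smul_left, div_mul_cancel₀ _ hux.ne', sub_self]
  have hle : finrank ℝ (M ⊔ Submodule.span ℝ {x} : Submodule ℝ V) ≤ m := by
    have h3 := Submodule.finrank_add_le_finrank_add_finrank M (Submodule.span ℝ {x})
    rw [finrank_span_singleton hx0] at h3
    omega
  have hq : q ∈ (M ⊔ Submodule.span ℝ {x})ᗮ := by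
    rw [← Submodule.inf_orthogonal]
    refine ⟨hqM, ?_⟩
    exact (Submodule.mem_orthogonal_singleton_iff_inner_left).2 hqx
  obtain ⟨L', hL', hle'⟩ := exists_sigmaIll_of_mem hm _ hle hqK hq0 hq
    ((le_sup_right : _ ≤ M ⊔ Submodule.span ℝ {x}) (Submodule.mem_span_singleton_self x)) hxK hx0
  exact ⟨L', hL', le_sup_left.trans hle'⟩

/-- Separation: a subspace missing `int K` is orthogonal to a nonzero element of `K*`. -/
lemma exists_dualCone_of_disjoint [FiniteDimensional ℝ V] {K : Set V} (hK : IsRegularCone V K)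
    (M : Submodule ℝ V) (hd : ∀ x ∈ M, x ∉ interior K) :
    ∃ u ∈ dualCone K, u ≠ 0 ∧ u ∈ Mᗮ := by
  obtain ⟨f, s, h1, h2⟩ := geometric_hahn_banach_open hK.convex.interior isOpen_interior
    M.convex (Set.disjoint_left.2 fun x hx hxM => hd x hxM hx)
  have hs : s ≤ 0 := by simpa using h2 0 M.zero_mem
  -- A linear functional bounded below on a subspace vanishes there.
  have hM : ∀ x ∈ M, f x = 0 := by
    intro x hx
    by_contra hne
    have := h2 (((s - 1) / f x) • x) (M.smul_mem _ hx)
    rw [map_smul, smul_eq_mul, div_mul_cancel₀ _ hne] at this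
    linarith
  have hKf : ∀ x ∈ K, f x ≤ 0 := by
    intro x hx
    have hx' : x ∈ closure (interior K) := by
      rw [hK.convex.closure_interior_eq_closure_of_nonempty_interior hK.solid]
      exact subset_closure hx
    have hcl : IsClosed {x : V | f x ≤ 0} := isClosed_le f.continuous continuous_const
    exact closure_minimal (fun z hz => ((h1 z hz).trans_le hs).le) hcl hx'
  have hin : ∀ x, ⟪-(InnerProductSpace.toDual ℝ V).symm f, x⟫ = -f x := by
    intro x
    rw [inner_neg_left, InnerProductSpace.toDual_symm_apply]
  refine ⟨-(InnerProductSpace.toDual ℝ V).symm f, ?_, ?_, ?_⟩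
  · intro x hx
    rw [hin]
    linarith [hKf x hx]
  · intro h
    obtain ⟨z, hz⟩ := hK.solid
    have h3 := hin z
    rw [h, inner_zero_left] at h3
    linarith [h1 z hz]
  · rw [Submodule.mem_orthogonal']
    intro x hx
    rw [hin, hM x hx, neg_zero]

/-- Nonzero dual vectors are strictly positive on `int K`. -/
lemma inner_ne_zero_of_mem_interior {K : Set V} {u z : V} (hu : u ∈ dualCone K) (hu0 : u ≠ 0)
    (hz : z ∈ interior K) : ⟪u, z⟫ ≠ 0 := by
  intro h0
  have hcont : Filter.Tendsto (fun ε : ℝ => z - ε • u) (nhdsWithin 0 (Set.Ioi 0))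
      (nhds z) := by
    have : Continuous (fun ε : ℝ => z - ε • u) := by fun_prop
    simpa using (this.tendsto 0).mono_left nhdsWithin_le_nhds
  have hev := hcont.eventually (isOpen_interior.mem_nhds hz)
  obtain ⟨ε, hε, hε0⟩ := (hev.and self_mem_nhdsWithin).exists
  have h1 := hu _ (interior_subset hε)
  rw [inner_sub_right, inner_smul_right, h0, real_inner_self_eq_norm_sq] at h1
  have h2 : 0 < ε * ‖u‖ ^ 2 := mul_pos hε0 (by positivity)
  linarith

/-- Moving along the segment from `A` to an infeasible map `B`, the image has to pass through an
ill-posed subspace: at the first parameter `t` where the image of `A + t • (B - A)` misses `int K`,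
that image is contained in some member of `Σ_m`. -/
lemma exists_sigmaIll_on_segment [FiniteDimensional ℝ V] [FiniteDimensional ℝ W]
    {K : Set V} (hK : IsRegularCone V K) {m : ℕ} (hm : m < finrank ℝ V) (hW : finrank ℝ W = m)
    (A B : W →ₗ[ℝ] V) (hint : ((LinearMap.range A : Set V) ∩ interior K).Nonempty)
    {u : V} (hu : u ∈ dualCone K) (hu0 : u ≠ 0) (huB : ∀ w, ⟪u, B w⟫ = 0) :
    ∃ t ∈ Set.Icc (0 : ℝ) 1, ∃ L' ∈ SigmaIll K m, ∀ w, A w + t • (B w - A w) ∈ L' := by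
  have hcA : Continuous A := A.continuous_of_finiteDimensional
  have hcB : Continuous B := B.continuous_of_finiteDimensional
  have h0K : (0 : V) ∉ interior K := fun h =>
    inner_ne_zero_of_mem_interior hu hu0 h (inner_zero_right u)
  obtain ⟨_, ⟨w₀, rfl⟩, hw₀⟩ := hint
  have hw₀0 : A w₀ ≠ 0 := fun h => h0K (h ▸ hw₀)
  set T : Set ℝ := Set.Icc 0 1 ∩ {t | ∀ w, A w + t • (B w - A w) ∉ interior K} with hT
  have hTc : IsCompact T := by
    refine isCompact_Icc.inter_right ?_
    rw [Set.ofPred_forall]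
    refine isClosed_iInter fun w => ?_
    have : Continuous fun t : ℝ => A w + t • (B w - A w) := by fun_prop
    exact (isOpen_interior.preimage this).isClosed_compl
  have h1T : (1 : ℝ) ∈ T := by
    refine ⟨by simp, fun w h => ?_⟩
    rw [one_smul, add_sub_cancel] at h
    exact inner_ne_zero_of_mem_interior hu hu0 h (huB w)
  obtain ⟨t, ht, htmin⟩ := hTc.exists_isLeast ⟨1, h1T⟩
  have ht0 : t ≠ 0 := by
    rintro rfl
    exact ht.2 w₀ (by simpa using hw₀)
  refine ⟨t, ht.1, ?_⟩
  let C : W →ₗ[ℝ] V := A + t • (B - A)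
  have hC : ∀ w, C w = A w + t • (B w - A w) := fun w => rfl
  obtain ⟨q, hqK, hq0, hqC⟩ := exists_dualCone_of_disjoint hK (LinearMap.range C) (by
    rintro _ ⟨w, rfl⟩
    exact ht.2 w)
  have hrank := LinearMap.finrank_range_add_finrank_ker C
  suffices h : ∃ L' ∈ SigmaIll K m, LinearMap.range C ≤ L' by
    obtain ⟨L', hL', hle⟩ := h
    exact ⟨L', hL', fun w => hle ⟨w, rfl⟩⟩
  by_cases hCinj : Function.Injective C
  -- Normalised witnesses for parameters below `t` accumulate at a witness for `t`.
  · have hScompact : IsCompact {z : ℝ × W | z ∈ Set.Icc (0 : ℝ) 1 ×ˢ Metric.sphere (0 : W) 1 ∧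
        A z.2 + z.1 • (B z.2 - A z.2) ∈ K} := by
      refine (isCompact_Icc.prod (isCompact_sphere (0 : W) 1)).inter_right ?_
      have : Continuous fun z : ℝ × W => A z.2 + z.1 • (B z.2 - A z.2) := by fun_prop
      exact hK.closed.preimage this
    have hsub : Set.Ico 0 t ⊆ Prod.fst '' {z : ℝ × W |
        z ∈ Set.Icc (0 : ℝ) 1 ×ˢ Metric.sphere (0 : W) 1 ∧
        A z.2 + z.1 • (B z.2 - A z.2) ∈ K} := by
      intro s hs
      have hs1 : s ∈ Set.Icc (0 : ℝ) 1 := ⟨hs.1, hs.2.le.trans ht.1.2⟩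
      have hsT : s ∉ T := fun h => (htmin h).not_gt hs.2
      have : ∃ w, A w + s • (B w - A w) ∈ interior K := by
        by_contra! hcon
        exact hsT ⟨hs1, hcon⟩
      obtain ⟨w, hw⟩ := this
      have hw0 : w ≠ 0 := by
        rintro rfl
        exact h0K (by simpa using hw)
      refine ⟨(s, ‖w‖⁻¹ • w), ⟨⟨hs1, by simp [norm_smul, hw0]⟩, ?_⟩, rfl⟩
      have := hK.smul_mem (inv_pos.2 (norm_pos_iff.2 hw0)) (interior_subset hw)
      simp only [map_smul]
      convert this using 1
      module
    have hcl := closure_minimal hsub (hScompact.image continuous_fst).isClosed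
    rw [closure_Ico ht0.symm] at hcl
    obtain ⟨⟨s, w⟩, ⟨⟨-, hw1⟩, hwK⟩, hst⟩ := hcl (Set.right_mem_Icc.2 ht.1.1)
    simp only at hst hwK hw1
    subst hst
    have hw0 : w ≠ 0 := by
      rintro rfl
      simp at hw1
    refine exists_sigmaIll_of_mem hm _ (by omega) hqK hq0 hqC ⟨w, rfl⟩ hwK ?_
    exact fun h => hw0 (hCinj (h.trans (map_zero C).symm))
  · have hker : 0 < finrank ℝ (LinearMap.ker C) := by
      rw [Nat.pos_iff_ne_zero, Ne, Submodule.finrank_eq_zero, LinearMap.ker_eq_bot]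
      exact hCinj
    exact exists_sigmaIll_of_finrank_lt hm hK _ (by omega) hqK hq0 hqC (interior_subset hw₀) hw₀0

/-! ### The two inequalities -/

/-- The vector `z` dual to `u` for the norm `N`: it lies on the hyperplane `⟪u, z⟫ = 1`, and is of
minimal norm there. -/
lemma exists_vector_attaining_dualNorm [FiniteDimensional ℝ V] {N : V → ℝ} (hN : IsNorm V N) {u : V}
    (hu : u ≠ 0) : ∃ z, ⟪u, z⟫ = 1 ∧ ∀ y, |⟪u, y⟫| * N z ≤ N y := by
  have hscale : ∀ y : V, y ≠ 0 → N ((N y)⁻¹ • y) = 1 := fun y hy => by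
    have := hN.pos hy
    rw [hN.smul_eq, abs_of_pos (inv_pos.2 this), inv_mul_cancel₀ this.ne']
  obtain ⟨y₀, hy₀, hmax⟩ := hN.isCompact_sphere.exists_isMaxOn ⟨_, hscale u hu⟩
    (f := fun y => ⟪u, y⟫) (by fun_prop)
  have hy₀1 : N y₀ = 1 := hy₀
  have hle : ∀ y, ⟪u, y⟫ ≤ ⟪u, y₀⟫ * N y := by
    intro y
    by_cases hy : y = 0
    · simp [hy, (hN.eq_zero_iff 0).2 rfl]
    have h : ⟪u, (N y)⁻¹ • y⟫ ≤ ⟪u, y₀⟫ := hmax (hscale y hy)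
    rw [inner_smul_right, inv_mul_le_iff₀ (hN.pos hy)] at h
    linarith
  have hpos : 0 < ⟪u, y₀⟫ := by
    have h1 := hle u
    have h2 : 0 < ⟪u, u⟫ := real_inner_self_pos.2 hu
    by_contra hcon
    nlinarith [hN.nonneg u]
  refine ⟨(⟪u, y₀⟫)⁻¹ • y₀, by rw [inner_smul_right, inv_mul_cancel₀ hpos.ne'], fun y => ?_⟩
  rw [hN.smul_eq, hy₀1, mul_one, abs_of_pos (inv_pos.2 hpos), ← div_eq_mul_inv,
    div_le_iff₀ hpos, mul_comm]
  refine abs_le.2 ⟨?_, hle y⟩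
  have := hle (-y)
  rw [inner_neg_right, hN.map_neg] at this
  linarith

/-- Every ill-posed `L'` yields a rank-one perturbation of `A` with image in a supporting
hyperplane and of size at most `‖A‖ * dist(L, L')`. -/
lemma exists_perturbation [FiniteDimensional ℝ V] [FiniteDimensional ℝ W] {N N' : V → ℝ}
    (hN : IsNorm V N) (hN' : IsNorm V N') {NW : W → ℝ} (hNW : IsNorm W NW)
    {K : Set V} {m : ℕ} (A : W →ₗ[ℝ] V) {L' : Submodule ℝ V} (hL' : L' ∈ SigmaIll K m) :
    ∃ B : W →ₗ[ℝ] V, (∃ u ∈ dualCone K, u ≠ 0 ∧ ∀ w : W, ⟪u, B w⟫ = 0) ∧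
      opNorm NW N' (A - B) ≤ opNorm NW N A * grDist N N' (LinearMap.range A) L' := by
  obtain ⟨u, ⟨huL, huK⟩, hu0⟩ : ∃ u ∈ (L'ᗮ : Set V) ∩ dualCone K, u ≠ 0 := by
    by_contra! hcon
    refine hL'.2.2 (Set.Subset.antisymm hcon ?_)
    rintro _ rfl
    exact ⟨L'ᗮ.zero_mem, fun x _ => by simp⟩
  obtain ⟨z, hz1, hz⟩ := exists_vector_attaining_dualNorm hN' hu0
  let B : W →ₗ[ℝ] V := A - ((innerₛₗ ℝ u).comp A).smulRight z
  have hAB : ∀ w, (A - B) w = ⟪u, A w⟫ • z := fun w => by simp [B]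
  refine ⟨B, ⟨u, huK, hu0, fun w => ?_⟩, ?_⟩
  · simp [B, inner_sub_right, inner_smul_right, hz1]
  have hG := grDist_nonneg hN hN' (LinearMap.range A) L'
  refine Real.sSup_le ?_ (mul_nonneg (opNorm_nonneg hN A) hG)
  rintro r ⟨w, hw, rfl⟩
  rw [hAB, hN'.smul_eq]
  by_cases hAw : A w = 0
  · rw [hAw, inner_zero_right, abs_zero, zero_mul]
    exact mul_nonneg (opNorm_nonneg hN A) hG
  have hpos := hN.pos hAw
  have h1 : |⟪u, A w⟫| * N' z / N (A w) ≤ grDist N N' (LinearMap.range A) L' := by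
    refine le_trans ?_ (le_grDist hN hN' (L := LinearMap.range A) ⟨w, rfl⟩ hAw)
    refine le_csInf ⟨_, 0, L'.zero_mem, rfl⟩ ?_
    rintro c ⟨v, hv, rfl⟩
    have h2 := hz (A w - v)
    rw [inner_sub_right, (Submodule.mem_orthogonal' _ _).1 huL v hv, sub_zero] at h2
    gcongr
  have h3 := le_opNorm hNW hN A w
  rw [hw, mul_one] at h3
  rw [div_le_iff₀ hpos] at h1
  calc _ ≤ _ := h1
    _ ≤ grDist N N' (LinearMap.range A) L' * opNorm NW N A := by gcongr
    _ = _ := mul_comm _ _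

/-- Renegar's distance to ill-posedness versus the Grassmann distance, feasible case:
`R(A) ≤ ‖A‖ ⬝ dist(L,Σ_m)` and `dist(L,Σ_m) ≤ ‖A⁻¹‖ ⬝ R(A)`. -/
theorem stmt_5 {V : Type*} [NormedAddCommGroup V] [InnerProductSpace ℝ V]
    [FiniteDimensional ℝ V]
    {W : Type*} [NormedAddCommGroup W] [InnerProductSpace ℝ W] [FiniteDimensional ℝ W]
    (N N' : V → ℝ) (hN : IsNorm V N) (hN' : IsNorm V N')
    (NW : W → ℝ) (hNW : IsNorm W NW)
    (K : Set V) (hK : IsRegularCone V K)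
    (m : ℕ) (hm : m < finrank ℝ V) (hW : finrank ℝ W = m)
    (A : W →ₗ[ℝ] V) (hinj : Function.Injective A)
    (hL : finrank ℝ (LinearMap.range A) = m)
    (hint : ((LinearMap.range A : Set V) ∩ interior K).Nonempty) :
    sInf {r : ℝ | ∃ B : W →ₗ[ℝ] V,
        (∃ u ∈ dualCone K, u ≠ 0 ∧ ∀ w : W, ⟪u, B w⟫ = 0) ∧
        r = opNorm NW N' (A - B)} ≤
      opNorm NW N A * distToIll N N' K m (LinearMap.range A) ∧
    distToIll N N' K m (LinearMap.range A) ≤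
      invNorm NW N A * sInf {r : ℝ | ∃ B : W →ₗ[ℝ] V,
        (∃ u ∈ dualCone K, u ≠ 0 ∧ ∀ w : W, ⟪u, B w⟫ = 0) ∧
        r = opNorm NW N' (A - B)} := by
  set S : Set ℝ := {r : ℝ | ∃ B : W →ₗ[ℝ] V,
        (∃ u ∈ dualCone K, u ≠ 0 ∧ ∀ w : W, ⟪u, B w⟫ = 0) ∧
        r = opNorm NW N' (A - B)} with hS
  -- Pointedness and `V ≠ 0` keep `0` out of `int K`, so `K*` contains a nonzero vector.
  have hVnt : Nontrivial V := Module.nontrivial_of_finrank_pos (R := ℝ) (by omega)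
  have h0int : (0 : V) ∉ interior K := by
    intro h
    have hn : K ∩ -K ∈ nhds (0 : V) := by
      have hK0 : K ∈ nhds (0 : V) := mem_interior_iff_mem_nhds.1 h
      refine Filter.inter_mem hK0 ?_
      have := continuous_neg.tendsto (0 : V)
      rw [neg_zero] at this
      exact this hK0
    rw [hK.pointed] at hn
    have hd : (nhdsWithin (0 : V) {0}ᶜ).NeBot := Module.punctured_nhds_neBot ℝ V 0
    exact infinite_of_mem_nhds 0 hn (Set.finite_singleton 0)
  obtain ⟨u₀, hu₀K, hu₀0, -⟩ := exists_dualCone_of_disjoint hK ⊥ (by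
    intro x hx
    rw [(Submodule.mem_bot ℝ).1 hx]
    exact h0int)
  have hSne : S.Nonempty := ⟨_, 0, ⟨u₀, hu₀K, hu₀0, by simp⟩, rfl⟩
  have hSbdd : BddBelow S := by
    refine ⟨0, ?_⟩
    rintro r ⟨B, -, rfl⟩
    exact opNorm_nonneg hN' _
  -- `a * sInf Q` is `sInf (a • Q)` for `a ≥ 0`, so bounds pass through the infima.
  have hpass : ∀ (a b : ℝ) (Q : Set ℝ), 0 ≤ a → Q.Nonempty → (∀ r ∈ Q, b ≤ a * r) →
      b ≤ a * sInf Q := by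
    intro a b Q ha hQ h
    rw [← smul_eq_mul, ← Real.sInf_smul_of_nonneg ha]
    refine le_csInf hQ.smul_set ?_
    rintro _ ⟨r, hr, rfl⟩
    exact h r hr
  constructor
  -- `Σ_m` must be seen to be nonempty, since the infimum over the empty set is `0`.
  · obtain ⟨-, -, L₀, hL₀, -⟩ := exists_sigmaIll_on_segment hK hm hW A 0 hint hu₀K hu₀0 (by simp)
    refine hpass _ _ _ (opNorm_nonneg hN A) ⟨_, L₀, hL₀, rfl⟩ ?_
    rintro r ⟨L', hL', rfl⟩
    obtain ⟨B, hB, hle⟩ := exists_perturbation hN hN' hNW A hL'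
    exact (csInf_le hSbdd ⟨B, hB, rfl⟩).trans hle
  · refine hpass _ _ _ (invNorm_nonneg hNW A) hSne ?_
    rintro r ⟨B, ⟨u, huK, hu0, huB⟩, rfl⟩
    obtain ⟨t, ht, L', hL', hmem⟩ := exists_sigmaIll_on_segment hK hm hW A B hint huK hu0 huB
    refine (distToIll_le hN hN' _ hL').trans ?_
    have hI := invNorm_nonneg (N := N) hNW A
    have hO : 0 ≤ opNorm NW N' (A - B) := opNorm_nonneg hN' _
    refine Real.sSup_le ?_ (mul_nonneg hI hO)
    rintro d ⟨_, ⟨w, rfl⟩, hw0, rfl⟩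
    refine (inner_grDist_le hN hN' _ (hmem w)).trans ?_
    rw [div_le_iff₀ (hN.pos hw0)]
    have he : A w - (A w + t • (B w - A w)) = t • (A - B) w := by
      rw [LinearMap.sub_apply]
      module
    rw [he, hN'.smul_eq, abs_of_nonneg ht.1]
    have h1 := le_opNorm hNW hN' (A - B) w
    have h2 := le_invNorm hNW hN A hinj w
    calc t * N' ((A - B) w) ≤ 1 * N' ((A - B) w) := by
          gcongr
          · exact hN'.nonneg _
          · exact ht.2
      _ ≤ opNorm NW N' (A - B) * NW w := by rw [one_mul]; exact h1
      _ ≤ opNorm NW N' (A - B) * (invNorm NW N A * N (A w)) := by gcongr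
      _ = invNorm NW N A * opNorm NW N' (A - B) * N (A w) := by ring
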